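/- Every class of finite pointed (Π,I)-Kripke models recognizable by a counting multichannel message passing automaton is definable by a countable disjunction of GMML formulae: the disjunction of all full graded multimodal types τ_n^{(M,w)} such that the automaton accepts (M,w) in round n defines exactly the recognized class. -/

import Mathlib

/-- Syntax of graded multimodal logic over propositions `P` and indices `I`. -/
inductive GMML (P : Type) (I : Type) : Type
  | top : GMML P I
  | prop : P → GMML P I
  | neg : GMML P I → GMML P I
  | and : GMML P I → GMML P I → GMML P I
  | dia : I → ℕ → GMML P I → GMML P I

/-- Satisfaction of a GMML formula at a point of a Kripke model. -/
def GMML.Sat {P I W : Type} (R : I → W → W → Prop) (V : P → W → Prop) :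
    W → GMML P I → Prop
  | _, .top => True
  | w, .prop p => V p w
  | w, .neg φ => ¬ GMML.Sat R V w φ
  | w, .and φ ψ => GMML.Sat R V w φ ∧ GMML.Sat R V w ψ
  | w, .dia α k φ => k ≤ {v | R α w v ∧ GMML.Sat R V v φ}.ncard

/-- Modal depth of a GMML formula. -/
def GMML.md {P I : Type} : GMML P I → ℕ
  | .top => 0
  | .prop _ => 0
  | .neg φ => φ.md
  | .and φ ψ => max φ.md ψ.md
  | .dia _ _ φ => φ.md + 1

/-- A finite pointed Kripke model of vocabulary `(P, I)`. -/
structure PKModel (P I : Type) where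
  W : Type
  fin : Finite W
  R : I → W → W → Prop
  V : P → W → Prop
  pt : W

/-- Satisfaction at the distinguished point of a pointed model. -/
def PKModel.Sat {P I : Type} (M : PKModel P I) (φ : GMML P I) : Prop :=
  GMML.Sat M.R M.V M.pt φ

/-- Finite conjunction of a list of formulae. -/
def GMML.bigAnd {P I : Type} : List (GMML P I) → GMML P I
  | [] => .top
  | φ :: l => .and φ (GMML.bigAnd l)

/-- Exact-count modality `⟨α⟩_{=k} φ := ⟨α⟩_{≥k} φ ∧ ¬⟨α⟩_{≥k+1} φ`. -/
def GMML.diaEq {P I : Type} (α : I) (k : ℕ) (φ : GMML P I) : GMML P I :=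
  .and (.dia α k φ) (.neg (.dia α (k + 1) φ))

open Classical in
/-- The depth-0 type: the conjunction specifying exactly which propositions hold. -/
noncomputable def type0 {P I W : Type} [Fintype P] (V : P → W → Prop) (w : W) :
    GMML P I :=
  GMML.bigAnd ((Finset.univ : Finset P).toList.map fun p =>
    if V p w then .prop p else .neg (.prop p))

open Classical in
/-- The finset of `α`-successors of `w`. -/
noncomputable def succs {I W : Type} [Fintype W] (R : I → W → W → Prop)
    (α : I) (w : W) : Finset W :=
  Finset.univ.filter fun v => R α w v

open Classical in
/-- The full graded multimodal `(P, I)`-type of modal depth `n` of a pointed model: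
it records the propositional information and, recursively, for each `α ∈ I`
the exact number of `α`-successors satisfying each full type of depth `n`
(together with the exact out-degree). -/
noncomputable def fullType {P I W : Type} [Fintype P] [Fintype I] [Fintype W]
    (R : I → W → W → Prop) (V : P → W → Prop) : ℕ → W → GMML P I
  | 0, w => type0 V w
  | n + 1, w =>
      .and (type0 V w)
        (GMML.bigAnd ((Finset.univ : Finset I).toList.flatMap fun α =>
          .dia α 0 (fullType R V n w) ::
          GMML.diaEq α (succs R α w).card .top ::
          (((succs R α w).image (fullType R V n)).toList.map fun σ =>
            GMML.diaEq α
              ((succs R α w).filter fun v => fullType R V n v = σ).card σ)))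

/-- The full type of modal depth `n` at an arbitrary point of a pointed model. -/
noncomputable def PKModel.fullTypeAt {P I : Type} [Fintype P] [Fintype I]
    (M : PKModel P I) (n : ℕ) (w : M.W) : GMML P I :=
  haveI := M.fin
  letI : Fintype M.W := Fintype.ofFinite M.W
  fullType M.R M.V n w

/-- The full graded multimodal type of modal depth `n` of the pointed model. -/
noncomputable def PKModel.fullType {P I : Type} [Fintype P] [Fintype I]
    (M : PKModel P I) (n : ℕ) : GMML P I :=
  M.fullTypeAt n M.pt

/-- A counting multichannel message passing automaton for `(P, I)` with states `Q`. -/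
structure CMMPA (P I Q : Type) where
  π : Set P → Q
  δ : (I → Multiset Q) → Q → Q
  F : Set Q

open Classical in
/-- The run of a CMMPA on a Kripke model: `run A R V t w` is the state of node `w`
in round `t`; in each round a node receives the multiset of previous states of its
`α`-successors along each channel `α`. -/
noncomputable def CMMPA.run {P I Q W : Type} [Fintype W] (A : CMMPA P I Q)
    (R : I → W → W → Prop) (V : P → W → Prop) : ℕ → W → Q
  | 0, w => A.π {p | V p w}
  | t + 1, w =>
      A.δ (fun α =>
        ((Finset.univ : Finset W).filter fun v => R α w v).val.map
          (CMMPA.run A R V t))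
        (CMMPA.run A R V t w)

/-- The run of a CMMPA on a finite pointed Kripke model. -/
noncomputable def PKModel.run {P I Q : Type} (M : PKModel P I) (A : CMMPA P I Q)
    (t : ℕ) (w : M.W) : Q :=
  haveI := M.fin
  letI : Fintype M.W := Fintype.ofFinite M.W
  A.run M.R M.V t w


/-- Stages used to enumerate all formulae. -/
def GMML.stage (P I : Type) : ℕ → Set (GMML P I)
  | 0 => ∅
  | n + 1 => {.top} ∪ Set.range .prop ∪ (Set.image .neg (GMML.stage P I n)) ∪
      (Set.image2 .and (GMML.stage P I n) (GMML.stage P I n)) ∪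
      ⋃ (α : I) (k : ℕ), Set.image (.dia α k) (GMML.stage P I n)

theorem GMML.stage_countable (P I : Type) [Countable P] [Countable I] (n : ℕ) :
    (GMML.stage P I n).Countable := by
  induction n with
  | zero => exact Set.countable_empty
  | succ n ih =>
    refine Set.Countable.union (Set.Countable.union (Set.Countable.union (Set.Countable.union
      (Set.countable_singleton _) (Set.countable_range _)) (ih.image _)) (ih.image2 ih _)) ?_
    exact Set.countable_iUnion fun α => Set.countable_iUnion fun k => ih.image _

theorem GMML.mem_stage {P I : Type} (φ : GMML P I) :
    ∃ n, ∀ m, n ≤ m → φ ∈ GMML.stage P I m := by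
  induction φ with
  | top => 
    refine ⟨1, fun m hm => ?_⟩
    obtain ⟨m, rfl⟩ := Nat.exists_eq_add_of_le' hm
    simp [GMML.stage]
  | prop p => 
    refine ⟨1, fun m hm => ?_⟩
    obtain ⟨m, rfl⟩ := Nat.exists_eq_add_of_le' hm
    simp [GMML.stage]
  | neg φ ih => 
    obtain ⟨n, hn⟩ := ih
    refine ⟨n + 1, fun m hm => ?_⟩
    obtain ⟨m, rfl⟩ := Nat.exists_eq_add_of_le' hm
    have := hn (m + n) (by omega)
    exact Or.inl (Or.inl (Or.inr ⟨φ, this, rfl⟩))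
  | and φ ψ ih1 ih2 => 
    obtain ⟨n, hn⟩ := ih1
    obtain ⟨k, hk⟩ := ih2
    refine ⟨n + k + 1, fun m hm => ?_⟩
    obtain ⟨m, rfl⟩ := Nat.exists_eq_add_of_le' hm
    exact Or.inl (Or.inr ⟨φ, hn (m + (n + k)) (by omega), ψ, hk (m + (n + k)) (by omega), rfl⟩)
  | dia α k φ ih => 
    obtain ⟨n, hn⟩ := ih
    refine ⟨n + 1, fun m hm => ?_⟩
    obtain ⟨m, rfl⟩ := Nat.exists_eq_add_of_le' hm
    have := hn (m + n) (by omega)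
    exact Or.inr (Set.mem_iUnion.2 ⟨α, Set.mem_iUnion.2 ⟨k, φ, this, rfl⟩⟩)

theorem GMML.set_countable {P I : Type} [Countable P] [Countable I] (S : Set (GMML P I)) :
    S.Countable := by
  refine (Set.countable_iUnion (GMML.stage_countable P I)).mono fun φ _ => ?_
  obtain ⟨n, hn⟩ := φ.mem_stage
  exact Set.mem_iUnion.2 ⟨n, hn n le_rfl⟩

theorem GMML.sat_bigAnd {P I W : Type} (R : I → W → W → Prop) (V : P → W → Prop) (w : W)
    (l : List (GMML P I)) :
    GMML.Sat R V w (GMML.bigAnd l) ↔ ∀ φ ∈ l, GMML.Sat R V w φ := by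
  induction l with
  | nil => simp [GMML.bigAnd, GMML.Sat]
  | cons a l ih => simp [GMML.bigAnd, GMML.Sat, ih]

theorem GMML.sat_diaEq {P I W : Type} (R : I → W → W → Prop) (V : P → W → Prop) (w : W)
    (α : I) (k : ℕ) (φ : GMML P I) :
    GMML.Sat R V w (GMML.diaEq α k φ) ↔ {v | R α w v ∧ GMML.Sat R V v φ}.ncard = k := by
  simp only [GMML.diaEq, GMML.Sat]
  omega

theorem sat_type0 {P I W W' : Type} [Fintype P] (R : I → W → W → Prop) (V : P → W → Prop) (w : W)
    (V' : P → W' → Prop) (v : W') :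
    GMML.Sat R V w (type0 V' v) ↔ ∀ p, V p w ↔ V' p v := by
  simp only [type0, GMML.sat_bigAnd, List.mem_map, Finset.mem_toList, Finset.mem_univ, true_and,
    forall_exists_index, forall_apply_eq_imp_iff]
  refine forall_congr' fun p => ?_
  by_cases h : V' p v <;> simp [h, GMML.Sat]

theorem type0_congr {P I W W' : Type} [Fintype P] (V : P → W → Prop) (w : W)
    (V' : P → W' → Prop) (v : W') (h : ∀ p, V p w ↔ V' p v) :
    (type0 V w : GMML P I) = type0 V' v := by
  unfold type0
  congr 2
  funext p
  by_cases hp : V' p v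
  · rw [if_pos hp, if_pos ((h p).2 hp)]
  · rw [if_neg hp, if_neg (fun hq => hp ((h p).1 hq))]

/-- Graded `n`-round equivalence. -/
def gEq {P I W W' : Type} [Fintype W] [Fintype W'] (R : I → W → W → Prop) (V : P → W → Prop)
    (R' : I → W' → W' → Prop) (V' : P → W' → Prop) : ℕ → W → W' → Prop
  | 0, w, v => ∀ p, V p w ↔ V' p v
  | n + 1, w, v => (∀ p, V p w ↔ V' p v) ∧
      ∀ α, Multiset.Rel (gEq R V R' V' n) (succs R α w).val (succs R' α v).val

section
variable {P I W W' : Type} [Fintype W] [Fintype W'] {R : I → W → W → Prop} {V : P → W → Prop}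
    {R' : I → W' → W' → Prop} {V' : P → W' → Prop}

theorem gEq_down (n : ℕ) : ∀ w v, gEq R V R' V' (n + 1) w v → gEq R V R' V' n w v := by
  induction n with
  | zero => exact fun w v h => h.1
  | succ n ih => exact fun w v h => ⟨h.1, fun α => (h.2 α).mono fun a _ b _ hab => ih a b hab⟩

theorem map_eq_of_rel {A B C : Type} {f : A → C} {g : B → C} {s : Multiset A} {t : Multiset B}
    (h : Multiset.Rel (fun a b => f a = g b) s t) : s.map f = t.map g := by
  rw [← Multiset.rel_eq, Multiset.rel_map]; exact h

theorem rel_of_map_eq {A B C : Type} {f : A → C} {g : B → C} {s : Multiset A} {t : Multiset B}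
    (h : s.map f = t.map g) : Multiset.Rel (fun a b => f a = g b) s t := by
  rw [← Multiset.rel_eq, Multiset.rel_map] at h; exact h

theorem gEq_run {Q : Type} (A : CMMPA P I Q) (n : ℕ) :
    ∀ w v, gEq R V R' V' n w v → A.run R V n w = A.run R' V' n v := by
  induction n with
  | zero =>
    intro w v h
    simp only [CMMPA.run]
    congr 1
    ext p
    exact h p
  | succ n ih =>
    intro w v h
    simp only [CMMPA.run]
    rw [ih w v (gEq_down n w v h)]
    congr 1
    funext α
    exact map_eq_of_rel ((h.2 α).mono fun a _ b _ hab => ih a b hab)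

open Classical in
theorem count_map_eq {A C : Type} (s : Finset A) (f : A → C) (c : C) :
    (s.val.map f).count c = (s.filter fun a => f a = c).card := by
  rw [Multiset.count_map]
  simp only [eq_comm (a := c)]
  rfl

variable [Fintype P] [Fintype I]

theorem gEq_fullType (n : ℕ) :
    ∀ w v, gEq R V R' V' n w v → fullType R V n w = fullType R' V' n v := by
  classical
  induction n with
  | zero => exact fun w v h => type0_congr _ _ _ _ h
  | succ n ih =>
    intro w v h
    have hm : ∀ α, (succs R α w).val.map (fullType R V n) =
        (succs R' α v).val.map (fullType R' V' n) := fun α =>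
      map_eq_of_rel ((h.2 α).mono fun a _ b _ hab => ih a b hab)
    have h1 : ∀ α, (succs R α w).card = (succs R' α v).card := fun α => by
      simpa using congrArg Multiset.card (hm α)
    have h2 : ∀ α, (succs R α w).image (fullType R V n) =
        (succs R' α v).image (fullType R' V' n) := fun α => by
      unfold Finset.image
      rw [hm α]
    have h3 : ∀ α σ, ((succs R α w).filter fun u => fullType R V n u = σ).card =
        ((succs R' α v).filter fun u => fullType R' V' n u = σ).card := fun α σ => by
      rw [← count_map_eq, ← count_map_eq, hm]
    simp only [fullType]
    rw [type0_congr V w V' v h.1, ih w v (gEq_down n w v h)]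
    congr 3
    funext α
    rw [h1 α, h2 α]
    congr 2
    congr 1
    funext σ
    congr 1
    convert h3 α σ

end

section
variable {P I : Type} [Fintype P] [Fintype I]

open Classical in
theorem sat_fullType_succ {W W' : Type} [Fintype W] [Fintype W'] (R : I → W → W → Prop)
    (V : P → W → Prop) (R' : I → W' → W' → Prop) (V' : P → W' → Prop) (n : ℕ) (w : W) (v : W') :
    GMML.Sat R V w (fullType R' V' (n + 1) v) ↔ (∀ p, V p w ↔ V' p v) ∧ ∀ α,
      (succs R α w).card = (succs R' α v).card ∧ ∀ x ∈ succs R' α v,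
        ((succs R α w).filter fun u => GMML.Sat R V u (fullType R' V' n x)).card =
        ((succs R' α v).filter fun u => fullType R' V' n u = fullType R' V' n x).card := by
  have key : ∀ α (q : W → Prop), {u | R α w u ∧ q u}.ncard =
      ((succs R α w).filter fun u => q u).card := by
    intro α q
    rw [← Set.ncard_coe_finset]
    congr 1
    ext u
    simp [succs]
  have key' : ∀ α, {u | R α w u ∧ GMML.Sat R V u .top}.ncard = (succs R α w).card := by
    intro α
    rw [key, Finset.filter_true_of_mem]
    intro u _
    trivial
  rw [fullType, GMML.Sat, sat_type0, GMML.sat_bigAnd]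
  refine and_congr_right fun _ => ?_
  simp only [List.mem_flatMap, Finset.mem_toList, Finset.mem_univ, true_and, List.mem_cons,
    List.mem_map, Finset.mem_image]
  constructor
  · intro h α
    refine ⟨?_, fun x hx => ?_⟩
    · have := h _ ⟨α, Or.inr (Or.inl rfl)⟩
      rwa [GMML.sat_diaEq, key'] at this
    · have := h _ ⟨α, Or.inr (Or.inr ⟨_, ⟨x, hx, rfl⟩, rfl⟩)⟩
      rw [GMML.sat_diaEq, key] at this
      convert this
  · rintro h φ ⟨α, rfl | rfl | ⟨_, ⟨x, hx, rfl⟩, rfl⟩⟩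
    · simp [GMML.Sat]
    · rw [GMML.sat_diaEq, key']; exact (h α).1
    · rw [GMML.sat_diaEq, key]
      convert (h α).2 x hx

theorem sat_fullType (n : ℕ) :
    (∀ (W : Type) (_ : Fintype W) (R : I → W → W → Prop) (V : P → W → Prop) (w : W),
      GMML.Sat R V w (fullType R V n w)) ∧
    (∀ (W W' : Type) (_ : Fintype W) (_ : Fintype W') (R : I → W → W → Prop) (V : P → W → Prop)
      (R' : I → W' → W' → Prop) (V' : P → W' → Prop) (w : W) (v : W'),
      GMML.Sat R V w (fullType R' V' n v) → gEq R V R' V' n w v) := by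
  classical
  induction n with
  | zero =>
    refine ⟨fun W _ R V w => ?_, fun W W' _ _ R V R' V' w v h => ?_⟩
    · exact (sat_type0 R V w V w).2 fun _ => Iff.rfl
    · exact (sat_type0 R V w V' v).1 h
  | succ n ih =>
    obtain ⟨ih1, ih2⟩ := ih
    have hiff : ∀ (W W' : Type) (_ : Fintype W) (_ : Fintype W') (R : I → W → W → Prop)
        (V : P → W → Prop) (R' : I → W' → W' → Prop) (V' : P → W' → Prop) (w : W) (v : W'),
        GMML.Sat R V w (fullType R' V' n v) ↔ fullType R V n w = fullType R' V' n v := by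
      intro W W' _ _ R V R' V' w v
      refine ⟨fun h => gEq_fullType n w v (ih2 _ _ _ _ _ _ _ _ _ _ h), fun h => ?_⟩
      rw [← h]
      exact ih1 _ _ _ _ _
    refine ⟨fun W _ R V w => ?_, fun W W' _ _ R V R' V' w v h => ?_⟩
    · rw [sat_fullType_succ]
      refine ⟨fun _ => Iff.rfl, fun α => ⟨rfl, fun x _ => ?_⟩⟩
      simp only [hiff]
    · rw [sat_fullType_succ] at h
      refine ⟨h.1, fun α => ?_⟩
      obtain ⟨hc, hx⟩ := h.2 α
      simp only [hiff] at hx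
      have hle : (succs R' α v).val.map (fullType R' V' n) ≤
          (succs R α w).val.map (fullType R V n) := by
        rw [Multiset.le_iff_count]
        intro σ
        by_cases hσ : σ ∈ (succs R' α v).val.map (fullType R' V' n)
        · obtain ⟨x, hxm, rfl⟩ := Multiset.mem_map.1 hσ
          have := hx x hxm
          rw [← count_map_eq, ← count_map_eq] at this
          exact le_of_eq (by convert this.symm)
        · rw [Multiset.count_eq_zero_of_notMem hσ]
          exact Nat.zero_le _
      have heq := Multiset.eq_of_le_of_card_le hle (by
        simp only [Multiset.card_map, Finset.card_val]; exact hc.le)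
      refine (rel_of_map_eq heq.symm).mono fun a _ b _ hab => ?_
      exact ih2 _ _ _ _ _ _ _ _ _ _ ((hiff _ _ _ _ _ _ _ _ _ _).2 hab)

end

/-- every class of finite pointed models recognizable by a counting
multichannel message passing automaton is definable by the countable disjunction of
all full graded multimodal types `τ_n^{(M,w)}` of pointed models accepted in round `n`. -/
theorem recognizable_implies_definable {P I : Type} [Fintype P] [Fintype I]
    (Q : Type) [Countable Q] (A : CMMPA P I Q) :
    {τ : GMML P I | ∃ (N : PKModel P I) (n : ℕ),
        N.run A n N.pt ∈ A.F ∧ τ = N.fullType n}.Countable ∧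
    ∀ M : PKModel P I,
      (∃ t : ℕ, M.run A t M.pt ∈ A.F) ↔
        ∃ τ ∈ {τ : GMML P I | ∃ (N : PKModel P I) (n : ℕ),
            N.run A n N.pt ∈ A.F ∧ τ = N.fullType n}, M.Sat τ := by
  refine ⟨GMML.set_countable _, fun M => ⟨?_, ?_⟩⟩
  · rintro ⟨t, ht⟩
    refine ⟨M.fullType t, ⟨M, t, ht, rfl⟩, ?_⟩
    exact (sat_fullType t).1 _ _ _ _ _
  · rintro ⟨τ, ⟨N, n, hn, rfl⟩, hs⟩
    refine ⟨n, ?_⟩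
    have := M.fin
    have := N.fin
    letI : Fintype M.W := Fintype.ofFinite M.W
    letI : Fintype N.W := Fintype.ofFinite N.W
    have h := (sat_fullType n).2 _ _ (Fintype.ofFinite M.W) (Fintype.ofFinite N.W) _ _ _ _ _ _ hs
    have h2 : M.run A n M.pt = N.run A n N.pt := gEq_run A n _ _ h
    rw [h2]
    exact hn
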